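/- arXiv:1812.04294 — 2 statements merged into one kernel-verified Lean document; each statement's English description precedes it below -/
import Mathlib

section
/- Let s be an even positive integer, n an odd integer with n > 3s, and let α_1, ..., α_n ∈ ℂ be the roots, counted with multiplicity, of F(X) = X^n + X^(n-s) + X^(n-2s) + X^(n-3s) + 1 ∈ ℤ[X]. Set H(X) := n·F(X) − X·F'(X). Then the integer ∏_{i=1}^n H(α_i) satisfies ∏_{i=1}^n H(α_i) ≡ n (mod 8). -/
open Polynomial Finset

noncomputable def ee {n : ℕ} (f : Fin n → ℂ) (k : ℕ) : ℂ :=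
  MvPolynomial.aeval f (MvPolynomial.esymm (Fin n) ℤ k)

lemma newton_ee {n : ℕ} (f : Fin n → ℂ) (k : ℕ) :
    (∑ a ∈ range k, ((-1) ^ a * ee f a) * ∑ i, f i ^ (k - a)) + k * ((-1) ^ k * ee f k) = 0 := by
  have h := congrArg (MvPolynomial.aeval f) (MvPolynomial.mul_esymm_eq_sum (Fin n) ℤ k)
  have h2 : ∑ a ∈ antidiagonal k with a.1 < k, (-1) ^ a.1 * ee f a.1 * ∑ i, f i ^ a.2
      = ∑ a ∈ range k, ((-1) ^ a * ee f a) * ∑ i, f i ^ (k - a) := by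
    rw [Finset.sum_filter, Finset.Nat.sum_antidiagonal_eq_sum_range_succ_mk, Finset.sum_range_succ]
    simp only [lt_irrefl, if_false, add_zero]
    apply Finset.sum_congr rfl
    intro a ha
    rw [if_pos (Finset.mem_range.mp ha)]
  simp only [map_mul, map_natCast, map_pow, map_neg, map_one, map_sum, MvPolynomial.psum,
    MvPolynomial.aeval_X] at h
  change (k : ℂ) * ee f k = (-1) ^ (k + 1) * ∑ a ∈ antidiagonal k with a.1 < k, (-1) ^ a.1 * ee f a.1 * ∑ i, f i ^ a.2 at h
  rw [h2] at h
  rw [mul_left_comm, h, pow_succ]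
  have : ((-1 : ℂ) ^ k) * (-1) ^ k = 1 := by rw [← mul_pow]; simp
  linear_combination (- ∑ a ∈ range k, ((-1) ^ a * ee f a) * ∑ i, f i ^ (k - a)) * this

lemma ee_large {n : ℕ} (f : Fin n → ℂ) (k : ℕ) (hk : n < k) : ee f k = 0 := by
  unfold ee MvPolynomial.esymm
  rw [Finset.powersetCard_eq_empty.mpr (by simpa using hk)]
  simp

lemma ee_multiset {n : ℕ} (f : Fin n → ℂ) (k : ℕ) :
    ee f k = (Finset.univ.val.map f).esymm k :=
  MvPolynomial.aeval_esymm_eq_multiset_esymm _ _ _ _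

lemma ee_coeff {n : ℕ} (f : Fin n → ℂ) (k : ℕ) (hk : k ≤ n) :
    (-1) ^ k * ee f k = (∏ i : Fin n, (X - C (f i))).coeff (n - k) := by
  have h := Multiset.prod_X_sub_C_coeff (Finset.univ.val.map f) (k := n - k) (by simp)
  rw [Multiset.map_map] at h
  rw [ee_multiset]
  simp only [Multiset.card_map, Finset.card_val, Finset.card_univ, Fintype.card_fin,
    Nat.sub_sub_self hk] at h
  exact h.symm

lemma prod_ee {n : ℕ} (f : Fin n → ℂ) (y x : ℂ) :
    ∏ i, (y + x * f i) = ∑ k ∈ range (n + 1), ee f k * x ^ k * y ^ (n - k) := by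
  have h := congrArg (Polynomial.eval y)
    (Multiset.prod_X_add_C_eq_sum_esymm (Finset.univ.val.map (fun i => x * f i)))
  rw [Multiset.map_map] at h
  have h1 : eval y (∏ i, (X + C (x * f i))) = ∏ i, (y + x * f i) := by
    simp [eval_prod]
  rw [← h1]
  refine h.trans ?_
  rw [eval_finsetSum]
  simp only [Multiset.card_map, Finset.card_val, Finset.card_univ, Fintype.card_fin]
  refine Finset.sum_congr rfl fun k _ => ?_
  rw [Finset.esymm_map_val, ee_multiset, Finset.esymm_map_val]
  simp only [eval_mul, eval_C, eval_pow, eval_X]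
  congr 1
  rw [Finset.sum_mul]
  refine Finset.sum_congr rfl fun t ht => ?_
  rw [Finset.prod_mul_distrib, Finset.prod_const, (Finset.mem_powersetCard.mp ht).2]
  ring

/-- symmetric integer polynomials take integer values at the roots -/
lemma symm_int {n : ℕ} (f : Fin n → ℂ) (hf : ∀ k, ∃ z : ℤ, ee f k = z)
    (S : MvPolynomial (Fin n) ℤ) (hS : S.IsSymmetric) :
    ∃ z : ℤ, MvPolynomial.aeval f S = (z : ℂ) := by
  obtain ⟨q, hq⟩ := MvPolynomial.esymmAlgHom_surjective (σ := Fin n) ℤ (n := n) (by simp) ⟨S, hS⟩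
  have hq' : S = MvPolynomial.aeval (fun i : Fin n => MvPolynomial.esymm (Fin n) ℤ (i + 1)) q := by
    have := congrArg Subtype.val hq
    rw [MvPolynomial.esymmAlgHom_apply] at this
    exact this.symm
  choose z hz using hf
  refine ⟨MvPolynomial.aeval (fun i : Fin n => z (i + 1)) q, ?_⟩
  rw [hq', MvPolynomial.comp_aeval_apply]
  have : (fun i : Fin n => MvPolynomial.aeval f (MvPolynomial.esymm (Fin n) ℤ (i + 1)))
    = fun i : Fin n => algebraMap ℤ ℂ (z (i + 1)) := by
    funext i; exact hz _
  rw [this]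
  exact MvPolynomial.aeval_algebraMap_apply ℂ (fun i : Fin n => z (i + 1)) q

lemma ee_comp_int {n : ℕ} (f : Fin n → ℂ) (hf : ∀ k, ∃ z : ℤ, ee f k = z) (g : ℤ[X]) (k : ℕ) :
    ∃ z : ℤ, ee (fun i => aeval (f i) g) k = z := by
  obtain ⟨z, hz⟩ := symm_int f hf
    (MvPolynomial.aeval (fun i : Fin n => Polynomial.aeval (MvPolynomial.X i : MvPolynomial (Fin n) ℤ) g)
      (MvPolynomial.esymm (Fin n) ℤ k)) (by
      intro σ
      rw [MvPolynomial.comp_aeval_apply]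
      have : (fun i : Fin n => MvPolynomial.rename σ (Polynomial.aeval (MvPolynomial.X i : MvPolynomial (Fin n) ℤ) g))
        = (fun i : Fin n => Polynomial.aeval (MvPolynomial.X i : MvPolynomial (Fin n) ℤ) g) ∘ σ := by
        funext i
        rw [← Polynomial.aeval_algHom_apply]; simp
      rw [this, ← MvPolynomial.aeval_rename, MvPolynomial.rename_esymm])
  refine ⟨z, ?_⟩
  rw [← hz, MvPolynomial.comp_aeval_apply]
  unfold ee
  congr 2
  funext i
  rw [← Polynomial.aeval_algHom_apply]; simp

lemma psum_rec {s n : ℕ} (f : Fin n → ℂ) (hs0 : 0 < s) (hn : 3 * s < n)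
    (hc : ∀ a, (-1) ^ a * ee f a = (if a = 0 then 1 else 0) + (if a = s then 1 else 0)
      + (if a = 2 * s then 1 else 0) + (if a = 3 * s then 1 else 0) + (if a = n then 1 else 0))
    (p : ℕ → ℂ) (hp : ∀ m, p m = ∑ i, f i ^ m) (m : ℕ) (hm : 0 < m) (hmn : m ≠ n) :
    p m + (if s < m then p (m - s) else 0) + (if 2 * s < m then p (m - 2 * s) else 0)
      + (if 3 * s < m then p (m - 3 * s) else 0) + (if n < m then p (m - n) else 0)
      + (m : ℂ) * (if m = s ∨ m = 2 * s ∨ m = 3 * s then 1 else 0) = 0 := by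
  have h := newton_ee f m
  simp only [hc, ← hp, add_mul, Finset.sum_add_distrib, ite_mul, one_mul, zero_mul,
    Finset.sum_ite_eq', Finset.mem_range, hm, if_true, Nat.sub_zero] at h
  have e : (if m = s ∨ m = 2 * s ∨ m = 3 * s then (1 : ℂ) else 0) =
      (if m = 0 then 1 else 0) + (if m = s then 1 else 0) + (if m = 2 * s then 1 else 0)
      + (if m = 3 * s then 1 else 0) + (if m = n then 1 else 0) := by
    by_cases h1 : m = s
    · rw [if_pos (by omega), if_neg (by omega), if_pos h1, if_neg (by omega), if_neg (by omega),
        if_neg hmn]; ring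
    by_cases h2 : m = 2 * s
    · rw [if_pos (by omega), if_neg (by omega), if_neg h1, if_pos h2, if_neg (by omega),
        if_neg hmn]; ring
    by_cases h3 : m = 3 * s
    · rw [if_pos (by omega), if_neg (by omega), if_neg h1, if_neg h2, if_pos h3, if_neg hmn]; ring
    · rw [if_neg (by omega), if_neg (by omega), if_neg h1, if_neg h2, if_neg h3, if_neg hmn]; ring
  rw [e]
  linear_combination h

lemma psum_val {s n : ℕ} (hs : Even s) (hodd : Odd n) (hs0 : 0 < s) (hn : 3 * s < n)
    (p : ℕ → ℂ) (hrec : ∀ m : ℕ, 0 < m → m ≠ n →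
    p m + (if s < m then p (m - s) else 0) + (if 2 * s < m then p (m - 2 * s) else 0)
      + (if 3 * s < m then p (m - 3 * s) else 0) + (if n < m then p (m - n) else 0)
      + (m : ℂ) * (if m = s ∨ m = 2 * s ∨ m = 3 * s then 1 else 0) = 0) (m : ℕ) :
    0 < m → m < 2 * n → (Even m ∨ m < n) →
    p m = if s ∣ m then (if 4 * s ∣ m then 3 * (s : ℂ) else - s) else 0 := by
  induction m using Nat.strong_induction_on with
  | _ m ih =>
  intro hm hm2 hpar
  have hmn : m ≠ n := by
    rintro rfl
    rcases hpar with h | h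
    · exact (Nat.not_even_iff_odd.mpr hodd) h
    · omega
  have h := hrec m hm hmn
  have hpn : (if n < m then p (m - n) else 0) = 0 := by
    split_ifs with hlt
    · have hev : Even m := by rcases hpar with h | h; exact h; omega
      have ho : Odd (m - n) := Nat.Even.sub_odd hlt.le hev hodd
      rw [ih (m - n) (by omega) (by omega) (by omega) (Or.inr (by omega)), if_neg]
      intro hd
      exact (Nat.not_even_iff_odd.mpr ho) (hs.trans_dvd hd)
    · rfl
  rw [hpn] at h
  have hpar' : ∀ j, j * s < m → (Even (m - j * s) ∨ m - j * s < n) := by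
    intro j hj
    rcases hpar with h | h
    · left; exact (Nat.even_sub hj.le).mpr ⟨fun _ => hs.mul_left j, fun _ => h⟩
    · right; omega
  have key : ∀ j, 0 < j → j * s < m → p (m - j * s) = if s ∣ m - j * s then (if 4 * s ∣ m - j * s then 3 * (s : ℂ) else - s) else 0 := by
    intro j hj0 hj
    have : 0 < j * s := by positivity
    exact ih _ (by omega) (by omega) (by omega) (hpar' j hj)
  have k1 := key 1 (by norm_num)
  have k2 := key 2 (by norm_num)
  have k3 := key 3 (by norm_num)
  rw [one_mul] at k1
  by_cases hd : s ∣ m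
  · obtain ⟨k, rfl⟩ := hd
    have e1 : s < s * k ↔ 1 < k := by
      constructor <;> intro <;> nlinarith
    have e2 : 2 * s < s * k ↔ 2 < k := by
      constructor <;> intro <;> nlinarith
    have e3 : 3 * s < s * k ↔ 3 < k := by
      constructor <;> intro <;> nlinarith
    have f1 : s * k = s ↔ k = 1 := by
      constructor <;> intro <;> nlinarith
    have f2 : s * k = 2 * s ↔ k = 2 := by
      constructor <;> intro <;> nlinarith
    have f3 : s * k = 3 * s ↔ k = 3 := by
      constructor <;> intro <;> nlinarith
    have d (j : ℕ) : 4 * s ∣ s * j ↔ 4 ∣ j := by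
      rw [mul_comm 4 s]; exact Nat.mul_dvd_mul_iff_left hs0
    have g1 : s * k - s = s * (k - 1) := by rw [Nat.mul_sub, mul_one]
    have g2 : s * k - 2 * s = s * (k - 2) := by rw [Nat.mul_sub, mul_comm 2]
    have g3 : s * k - 3 * s = s * (k - 3) := by rw [Nat.mul_sub, mul_comm 3]
    simp only [g1, g2, g3, e1, e2, e3, f1, f2, f3, d, dvd_mul_right, if_true] at *
    push_cast at h
    by_cases hk : 3 < k
    · rw [if_pos (by omega), if_pos (by omega), if_pos hk, if_neg (by omega), k1 (by omega), k2 (by omega), k3 hk] at h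
      have : k % 4 = 0 ∨ k % 4 = 1 ∨ k % 4 = 2 ∨ k % 4 = 3 := by omega
      rcases this with t | t | t | t
      · rw [if_neg (by omega), if_neg (by omega), if_neg (by omega)] at h
        rw [if_pos (by omega)]
        linear_combination h
      · rw [if_pos (by omega), if_neg (by omega), if_neg (by omega)] at h
        rw [if_neg (by omega)]
        linear_combination h
      · rw [if_neg (by omega), if_pos (by omega), if_neg (by omega)] at h
        rw [if_neg (by omega)]
        linear_combination h
      · rw [if_neg (by omega), if_neg (by omega), if_pos (by omega)] at h
        rw [if_neg (by omega)]
        linear_combination h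
    · have hk0 : 0 < k := Nat.pos_of_mul_pos_left hm
      interval_cases k
      · norm_num at h ⊢
        linear_combination h
      · norm_num at h k1 ⊢
        rw [k1] at h
        linear_combination h
      · norm_num at h k1 k2 ⊢
        rw [k1, k2] at h
        linear_combination h
  · rw [if_neg hd]
    have nd : ∀ j, j * s < m → ¬ s ∣ m - j * s := by
      intro j hj hh
      apply hd
      have := Nat.dvd_add hh (Dvd.intro_left j rfl)
      rwa [Nat.sub_add_cancel hj.le] at this
    have n1 := nd 1
    rw [one_mul] at n1
    have c1 : (if s < m then p (m - s) else 0) = 0 := by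
      split_ifs with t
      · rw [k1 t, if_neg (n1 t)]
      · rfl
    have c2 : (if 2 * s < m then p (m - 2 * s) else 0) = 0 := by
      split_ifs with t
      · rw [k2 t, if_neg (nd 2 t)]
      · rfl
    have c3 : (if 3 * s < m then p (m - 3 * s) else 0) = 0 := by
      split_ifs with t
      · rw [k3 t, if_neg (nd 3 t)]
      · rfl
    rw [c1, c2, c3, if_neg] at h
    · linear_combination h
    · rintro (t | t | t) <;> apply hd <;> rw [t]
      · exact Dvd.intro_left _ rfl
      · exact Dvd.intro_left _ rfl

theorem prod_H_mod_eight (s n : ℕ) (hs : Even s) (hs0 : 0 < s)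
    (hodd : Odd n) (hn : 3 * s < n) (α : Fin n → ℂ)
    (F : Polynomial ℤ)
    (hF : F = X ^ n + X ^ (n - s) + X ^ (n - 2 * s) + X ^ (n - 3 * s) + 1)
    (hroots : F.map (Int.castRingHom ℂ) = ∏ i : Fin n, (X - C (α i))) :
    ∃ P : ℤ,
      (P : ℂ) = ∏ i : Fin n,
        Polynomial.aeval (α i) (C (n : ℤ) * F - X * Polynomial.derivative F) ∧
      P ≡ (n : ℤ) [ZMOD 8] := by
  have hc : ∀ a, (-1) ^ a * ee α a = (if a = 0 then 1 else 0) + (if a = s then 1 else 0)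
      + (if a = 2 * s then 1 else 0) + (if a = 3 * s then 1 else 0) + (if a = n then 1 else 0) := by
    intro a
    by_cases ha : a ≤ n
    · rw [ee_coeff α a ha, ← hroots, hF]
      simp only [Polynomial.map_add, Polynomial.map_pow, map_X, Polynomial.map_one, coeff_add,
        coeff_X_pow, coeff_one]
      congr 1
      · congr 1
        · congr 1
          · congr 1
            · exact if_congr (by omega) rfl rfl
            · exact if_congr (by omega) rfl rfl
          · exact if_congr (by omega) rfl rfl
        · exact if_congr (by omega) rfl rfl
      · exact if_congr (by omega) rfl rfl
    · rw [ee_large α a (by omega), if_neg (by omega), if_neg (by omega), if_neg (by omega),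
        if_neg (by omega), if_neg (by omega)]
      simp
  have hint : ∀ k, ∃ z : ℤ, ee α k = z := by
    intro k
    by_cases hk : k ≤ n
    · refine ⟨(-1) ^ k * F.coeff (n - k), ?_⟩
      have h := ee_coeff α k hk
      rw [← hroots, coeff_map] at h
      push_cast
      have h1 : ((-1 : ℂ) ^ k) * (-1) ^ k = 1 := by rw [← mul_pow]; simp
      have h2 : (F.coeff (n - k) : ℂ) = (-1) ^ k * ee α k := h.symm
      rw [h2]
      linear_combination (- ee α k) * h1
    · exact ⟨0, by rw [ee_large α k (by omega)]; simp⟩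
  set p : ℕ → ℂ := fun m => ∑ i, α i ^ m with hp
  have hval := psum_val hs hodd hs0 hn p (psum_rec α hs0 hn hc p (fun _ => rfl))
  set g : ℤ[X] := X ^ (n - s) + 2 * X ^ (n - 2 * s) + 3 * X ^ (n - 3 * s) with hg
  have hH : C (n : ℤ) * F - X * derivative F = C (n : ℤ) + C (s : ℤ) * g := by
    obtain ⟨r, rfl⟩ : ∃ r, n = 3 * s + r + 1 := ⟨n - 3 * s - 1, by omega⟩
    have t1 : 3 * s + r + 1 - s = (2 * s + r) + 1 := by omega
    have t2 : 3 * s + r + 1 - 2 * s = (s + r) + 1 := by omega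
    have t3 : 3 * s + r + 1 - 3 * s = r + 1 := by omega
    rw [hF, hg, t1, t2, t3]
    simp only [derivative_add, derivative_X_pow, derivative_one, Nat.add_sub_cancel]
    simp only [Nat.cast_add, Nat.cast_mul, Nat.cast_ofNat, Nat.cast_one, map_add, map_mul, map_one,
      map_ofNat, map_natCast]
    ring
  set γ : Fin n → ℂ := fun i => aeval (α i) g with hγ
  have hγi : ∀ i, γ i = α i ^ (n - s) + 2 * α i ^ (n - 2 * s) + 3 * α i ^ (n - 3 * s) := by
    intro i
    simp only [hγ, hg, map_add, map_mul, map_pow, aeval_X, map_ofNat]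
  have hoddval : ∀ j, Even (j * s) → 0 < j * s → j * s < n → p (n - j * s) = 0 := by
    intro j hj h0 hjn
    rw [hval _ (by omega) (by omega) (Or.inr (by omega)), if_neg]
    intro hd
    exact (Nat.not_even_iff_odd.mpr (Nat.Odd.sub_even hjn.le hodd hj)) (hs.trans_dvd hd)
  have hS1 : ∑ i, γ i = 0 := by
    have a1 := hoddval 1 (hs.mul_left _) (by omega) (by omega)
    have a2 := hoddval 2 (hs.mul_left _) (by omega) (by omega)
    have a3 := hoddval 3 (hs.mul_left _) (by omega) (by omega)
    rw [one_mul] at a1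
    simp only [hγi, Finset.sum_add_distrib, ← Finset.mul_sum]
    simp only [hp] at a1 a2 a3
    rw [a1, a2, a3]; ring
  have hS2e : ∑ i, γ i ^ 2 = p (2 * n - 2 * s) + 4 * p (2 * n - 3 * s) + 10 * p (2 * n - 4 * s)
      + 12 * p (2 * n - 5 * s) + 9 * p (2 * n - 6 * s) := by
    simp only [hp, Finset.mul_sum, ← Finset.sum_add_distrib]
    refine Finset.sum_congr rfl fun i _ => ?_
    rw [hγi]
    obtain ⟨r, rfl⟩ : ∃ r, n = 3 * s + r := ⟨n - 3 * s, by omega⟩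
    have t1 : 3 * s + r - s = 2 * s + r := by omega
    have t2 : 3 * s + r - 2 * s = s + r := by omega
    have t3 : 3 * s + r - 3 * s = r := by omega
    have u1 : 2 * (3 * s + r) - 2 * s = 4 * s + 2 * r := by omega
    have u2 : 2 * (3 * s + r) - 3 * s = 3 * s + 2 * r := by omega
    have u3 : 2 * (3 * s + r) - 4 * s = 2 * s + 2 * r := by omega
    have u4 : 2 * (3 * s + r) - 5 * s = s + 2 * r := by omega
    have u5 : 2 * (3 * s + r) - 6 * s = 2 * r := by omega
    rw [t1, t2, t3, u1, u2, u3, u4, u5]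
    ring
  have hev : ∀ j, 0 < j → j ≤ 6 → p (2 * n - j * s) = if s ∣ 2 * n - j * s then
      (if 4 * s ∣ 2 * n - j * s then 3 * (s : ℂ) else - s) else 0 := by
    intro j hj hj6
    have h1 : j * s ≤ 6 * s := Nat.mul_le_mul_right s hj6
    have h2 : 0 < j * s := by positivity
    refine hval _ (by omega) (by omega) (Or.inl ?_)
    exact (Nat.even_sub (by omega)).mpr ⟨fun _ => hs.mul_left j, fun _ => even_two_mul n⟩
  have hdv : ∀ j, j ≤ 6 → (s ∣ 2 * n - j * s ↔ s ∣ 2 * n) := by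
    intro j hj6
    have h1 : j * s ≤ 6 * s := Nat.mul_le_mul_right s hj6
    exact (Nat.dvd_sub_iff_left (by omega) (Dvd.intro_left j rfl))
  have hn4 : ∀ j, j ≤ 3 → ¬ 4 * s ∣ 2 * n - (2 * j) * s := by
    intro j hj hd
    have h1 : (2 * j) * s ≤ 6 * s := Nat.mul_le_mul_right s (by omega)
    have h4 : 4 ∣ 2 * n - (2 * j) * s := (Dvd.intro _ rfl).trans hd
    obtain ⟨t, ht⟩ := hs
    obtain ⟨u, hu⟩ := hodd
    have h5 : 4 ∣ (2 * j) * s := ⟨j * t, by rw [ht]; ring⟩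
    have h6 := Nat.dvd_add h4 h5
    rw [Nat.sub_add_cancel (by omega)] at h6
    omega
  have hpint : ∀ j, 0 < j → j ≤ 6 → ∃ z : ℤ, p (2 * n - j * s) = z := by
    intro j h0 h6
    rw [hev j h0 h6]
    split_ifs
    · exact ⟨3 * s, by push_cast; rfl⟩
    · exact ⟨-s, by push_cast; rfl⟩
    · exact ⟨0, by simp⟩
  have hS2 : ∃ w : ℤ, ∑ i, γ i ^ 2 = 4 * (w : ℂ) := by
    obtain ⟨u, hu⟩ := hpint 3 (by norm_num) (by norm_num)
    obtain ⟨v, hv⟩ := hpint 5 (by norm_num) (by norm_num)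
    have b2 := hev 2 (by norm_num) (by norm_num)
    have b4 := hev 4 (by norm_num) (by norm_num)
    have b6 := hev 6 (by norm_num) (by norm_num)
    rw [if_neg (hn4 1 (by norm_num))] at b2
    rw [if_neg (hn4 2 (by norm_num))] at b4
    rw [if_neg (hn4 3 (by norm_num))] at b6
    simp only [hdv 2 (by norm_num)] at b2
    simp only [hdv 4 (by norm_num)] at b4
    simp only [hdv 6 (by norm_num)] at b6
    rw [hS2e, b2, b4, b6, hu, hv]
    split_ifs
    · exact ⟨u + 3 * v - 5 * s, by push_cast; ring⟩
    · exact ⟨u + 3 * v, by push_cast; ring⟩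
  obtain ⟨w, hw⟩ := hS2
  choose ε hε using ee_comp_int α hint g
  have hE0 : ee γ 0 = 1 := by simp [ee]
  have hE1 : ee γ 1 = 0 := by
    have h := newton_ee γ 1
    simp [hE0, hS1] at h
    exact h
  have hE2 : ee γ 2 = -2 * (w : ℂ) := by
    have h := newton_ee γ 2
    simp [Finset.sum_range_succ, hE0, hE1, hw] at h
    linear_combination h / 2
  have hε0 : ε 0 = 1 := by exact_mod_cast (hε 0).symm.trans hE0
  have hε1 : ε 1 = 0 := by exact_mod_cast (hε 1).symm.trans hE1
  have hε2 : ε 2 = -2 * w := by exact_mod_cast (hε 2).symm.trans hE2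
  refine ⟨∑ k ∈ range (n + 1), ε k * (s : ℤ) ^ k * (n : ℤ) ^ (n - k), ?_, ?_⟩
  · rw [hH]
    have : ∀ i, aeval (α i) (C (n : ℤ) + C (s : ℤ) * g) = (n : ℂ) + s * γ i := by
      intro i
      simp [hγ]
    simp only [this]
    rw [prod_ee]
    push_cast
    refine Finset.sum_congr rfl fun k _ => ?_
    rw [← hε k]
  · obtain ⟨t, ht⟩ := hs
    have hterm : ∀ k, k ≠ 0 → ε k * (s : ℤ) ^ k * (n : ℤ) ^ (n - k) ≡ 0 [ZMOD 8] := by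
      intro k hk
      rw [Int.modEq_zero_iff_dvd]
      apply Dvd.dvd.mul_right
      have hs2 : (s : ℤ) = 2 * t := by rw [ht]; push_cast; ring
      match k, hk with
      | 1, _ => rw [hε1]; simp
      | 2, _ => rw [hε2, hs2]; exact ⟨-w * t ^ 2, by ring⟩
      | k + 3, _ => rw [hs2]; exact ⟨ε (k + 3) * (2 * t) ^ k * t ^ 3, by ring⟩
    rw [Finset.sum_range_succ']
    have hz : ∑ k ∈ range n, ε (k + 1) * (s : ℤ) ^ (k + 1) * (n : ℤ) ^ (n - (k + 1)) ≡ 0 [ZMOD 8] := by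
      rw [Int.modEq_zero_iff_dvd]
      exact Finset.dvd_sum fun k _ => Int.modEq_zero_iff_dvd.mp (hterm (k + 1) (by omega))
    have hnn : ((n : ℤ)) ^ n ≡ n [ZMOD 8] := by
      obtain ⟨u, hu⟩ := hodd
      have h1 : (n : ℤ) ^ 2 ≡ 1 [ZMOD 8] := by
        obtain ⟨v, hv⟩ := Int.even_mul_succ_self (u : ℤ)
        refine (Int.modEq_iff_dvd.mpr ⟨v, ?_⟩).symm
        rw [hu]
        push_cast
        linear_combination 4 * hv
      have h2 := ((h1.pow u).mul_right (n : ℤ))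
      rw [← pow_mul, ← pow_succ, ← hu, one_pow, one_mul] at h2
      exact h2
    have := hz.add hnn
    simpa [hε0] using this
end

section
/- Let s be an even positive integer and n an odd integer with n > 3s, and let F(X) = X^n + X^(n-s) + X^(n-2s) + X^(n-3s) + 1 ∈ ℤ[X] with roots α_1, ..., α_n ∈ ℂ counted with multiplicity. Then the discriminant D(F) := ∏_{1 ≤ i < j ≤ n} (α_i − α_j)^2 is an integer satisfying D(F) ≡ (−1)^(n(n−1)/2) · n (mod 8); explicitly, D(F) ≡ 1 (mod 8) if n ≡ ±1 (mod 8), and D(F) ≡ 5 (mod 8) if n ≡ ±3 (mod 8). -/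
open Polynomial Finset

lemma aux_prod {A ι : Type*} [CommRing A] (a t : A) (b : ι → A) (S : Finset ι) :
    ∃ e R : A, 2 * e = (∑ i ∈ S, b i) ^ 2 - ∑ i ∈ S, b i ^ 2 ∧
      a ^ 2 * ∏ i ∈ S, (a + t * b i) =
        a ^ S.card * (a ^ 2 + a * t * ∑ i ∈ S, b i + t ^ 2 * e) + t ^ 3 * R := by
  classical
  induction S using Finset.induction_on with
  | empty => exact ⟨0, 0, by simp, by simp⟩
  | insert j S hj ih =>
    obtain ⟨e, R, h1, h2⟩ := ih
    refine ⟨e + b j * ∑ i ∈ S, b i, a ^ S.card * b j * e + R * (a + t * b j), ?_, ?_⟩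
    · rw [sum_insert hj, sum_insert hj, mul_add, h1]; ring
    · rw [sum_insert hj, prod_insert hj, card_insert_of_notMem hj, mul_left_comm, h2]; ring

lemma aux_newton (n : ℕ) (α : Fin n → ℂ) :
    (PowerSeries.mk fun k => ∑ i, α i ^ k) * ((∏ i, (1 - C (α i) * X) : ℂ[X]) : PowerSeries ℂ) =
     (((n : ℂ[X]) * ∏ i, (1 - C (α i) * X) - X * derivative (∏ i, (1 - C (α i) * X)) : ℂ[X]) : PowerSeries ℂ) := by
  classical
  have h1 : (PowerSeries.mk fun k => ∑ i, α i ^ k) = ∑ i, PowerSeries.mk fun k => α i ^ k := by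
    ext k; simp
  have h2 (i) : (PowerSeries.mk fun k => α i ^ k) * ((1 - C (α i) * X : ℂ[X]) : PowerSeries ℂ) = 1 := by
    ext k
    rcases k with _ | k
    · simp
    · simp [mul_sub, ← mul_assoc, PowerSeries.coeff_succ_mul_X, pow_succ]
  have h3 : ((n : ℂ[X]) * ∏ i, (1 - C (α i) * X) - X * derivative (∏ i, (1 - C (α i) * X)) : ℂ[X])
      = ∑ i, ∏ j ∈ univ.erase i, (1 - C (α j) * X) := by
    rw [derivative_prod_finset, mul_sum]
    have : (n : ℂ[X]) * ∏ i, (1 - C (α i) * X) = ∑ i : Fin n, ∏ i, (1 - C (α i) * X) := by simp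
    rw [this, ← sum_sub_distrib]
    refine sum_congr rfl fun i _ => ?_
    rw [← mul_prod_erase univ _ (mem_univ i)]
    simp
    ring
  rw [h1, h3, sum_mul]
  rw [← Polynomial.coeToPowerSeries.ringHom_apply, ← Polynomial.coeToPowerSeries.ringHom_apply, map_sum]
  refine sum_congr rfl fun i _ => ?_
  rw [← mul_prod_erase univ _ (mem_univ i), map_mul, ← mul_assoc]
  rw [Polynomial.coeToPowerSeries.ringHom_apply, h2, one_mul]

lemma aux_rev (s a : ℕ) (α : Fin (a + 3 * s) → ℂ)
    (h : (X ^ (a + 3 * s) + X ^ (a + 2 * s) + X ^ (a + s) + X ^ a + 1 : ℂ[X]) = ∏ i, (X - C (α i))) :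
    (∏ i, (1 - C (α i) * X) : ℂ[X]) = 1 + X ^ s + X ^ (2 * s) + X ^ (3 * s) + X ^ (a + 3 * s) := by
  apply Polynomial.eq_of_infinite_eval_eq
  refine Set.Infinite.mono (s := {0}ᶜ) ?_ (Set.Finite.infinite_compl (Set.finite_singleton 0))
  intro x hx
  have hx : x ≠ 0 := by simpa using hx
  have h' := congrArg (fun p => x ^ (a + 3 * s) * p.eval x⁻¹) h
  simp only [eval_prod, eval_add, eval_pow, eval_X, eval_one, eval_sub, eval_C] at h'
  have : ∏ i, (1 - α i * x) = x ^ (a + 3 * s) * ∏ i, (x⁻¹ - α i) := by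
    have : x ^ (a + 3 * s) = ∏ i : Fin (a + 3 * s), x := by simp
    rw [this, ← prod_mul_distrib]
    refine prod_congr rfl fun i _ => ?_
    field_simp
  simp only [Set.mem_ofPred_eq, eval_prod, eval_add, eval_pow, eval_X, eval_one, eval_sub, eval_C, eval_mul]
  rw [this, ← h']
  simp only [pow_add, pow_mul', inv_pow]
  field_simp

lemma aux_int (a b : ℤ) (hb : b ≠ 0) (R : ℂ) (hR : IsIntegral ℤ R) (h : (a : ℂ) = b * R) : b ∣ a := by
  have h1 : R = algebraMap ℚ ℂ (a / b : ℚ) := by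
    have : (b : ℂ) ≠ 0 := by exact_mod_cast hb
    simp [h]; field_simp
  rw [h1, isIntegral_algebraMap_iff (algebraMap ℚ ℂ).injective] at hR
  obtain ⟨c, hc⟩ := IsIntegrallyClosed.isIntegral_iff.mp hR
  refine ⟨c, ?_⟩
  have hb' : (b : ℚ) ≠ 0 := by exact_mod_cast hb
  have : (a : ℚ) = b * c := by
    simp at hc; rw [hc]; field_simp
  exact_mod_cast this

lemma aux_rec (s a : ℕ) (α : Fin (a + 3 * s) → ℂ)
    (h : (X ^ (a + 3 * s) + X ^ (a + 2 * s) + X ^ (a + s) + X ^ a + 1 : ℂ[X]) = ∏ i, (X - C (α i)))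
    (p : ℕ → ℂ) (hp : ∀ k, p k = ∑ i, α i ^ k) (k : ℕ) (hk : 0 < k) :
    p k + ((if s ≤ k then p (k - s) else 0) - (if k = s then (a + 2 * s : ℂ) else 0))
     + ((if 2 * s ≤ k then p (k - 2 * s) else 0) - (if k = 2 * s then (a + s : ℂ) else 0))
     + ((if 3 * s ≤ k then p (k - 3 * s) else 0) - (if k = 3 * s then (a : ℂ) else 0))
     + (if a + 3 * s ≤ k then p (k - (a + 3 * s)) else 0) = 0 := by
  have h1 := aux_newton _ α
  rw [aux_rev s a α h] at h1
  have hX (m : ℕ) : (X : ℂ[X]) * derivative (X ^ m) = (m : ℂ[X]) * X ^ m := by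
    rcases m with _ | m
    · simp
    · simp; ring
  have h2 : (((a + 3 * s : ℕ) : ℂ[X]) * (1 + X ^ s + X ^ (2 * s) + X ^ (3 * s) + X ^ (a + 3 * s)) -
      X * derivative (1 + X ^ s + X ^ (2 * s) + X ^ (3 * s) + X ^ (a + 3 * s)) : ℂ[X]) =
      C (a + 3 * s : ℂ) + C (a + 2 * s : ℂ) * X ^ s + C (a + s : ℂ) * X ^ (2 * s)
        + C (a : ℂ) * X ^ (3 * s) := by
    simp only [derivative_add, mul_add, hX, derivative_one]
    have c2 : (C 2 : ℂ[X]) = 2 := map_ofNat C 2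
    have c3 : (C 3 : ℂ[X]) = 3 := map_ofNat C 3
    simp [c2, c3]
    ring
  rw [h2] at h1
  have h3 := congrArg (PowerSeries.coeff k) h1
  have hcf (c0 c1 c2 c3 : ℂ) : (C c0 + C c1 * X ^ s + C c2 * X ^ (2 * s)
      + C c3 * X ^ (3 * s) : ℂ[X]).coeff k = (if k = s then c1 else 0) +
      (if k = 2 * s then c2 else 0) + (if k = 3 * s then c3 else 0) := by
    simp only [coeff_add, coeff_C_mul, coeff_X_pow, mul_ite, mul_zero, mul_one]
    rw [coeff_C_of_ne_zero (by omega), zero_add]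
  rw [Polynomial.coeff_coe, hcf] at h3
  simp only [Polynomial.coe_add, Polynomial.coe_pow, Polynomial.coe_X, Polynomial.coe_one, mul_add,
    map_add, PowerSeries.coeff_mul_X_pow', mul_one, PowerSeries.coeff_mk, ← hp] at h3
  linear_combination h3

lemma aux_odd (s a : ℕ) (hs : s % 2 = 0) (hs0 : 0 < s) (ha : a % 2 = 1) (α : Fin (a + 3 * s) → ℂ)
    (h : (X ^ (a + 3 * s) + X ^ (a + 2 * s) + X ^ (a + s) + X ^ a + 1 : ℂ[X]) = ∏ i, (X - C (α i)))
    (p : ℕ → ℂ) (hp : ∀ k, p k = ∑ i, α i ^ k) (k : ℕ) (hk : k % 2 = 1) (hkn : k < a + 3 * s) :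
    p k = 0 := by
  induction k using Nat.strong_induction_on with
  | _ k ih =>
    have hr := aux_rec s a α h p hp k (by omega)
    have e (m : ℕ) (hm : m % 2 = 0) (hm0 : 0 < m) : (if m ≤ k then p (k - m) else 0) = 0 := by
      split_ifs
      · exact ih _ (by omega) (by omega) (by omega)
      · rfl
    rw [e s hs hs0, e (2 * s) (by omega) (by omega), e (3 * s) (by omega) (by omega),
      if_neg (by omega), if_neg (by omega), if_neg (by omega), if_neg (by omega)] at hr
    simpa using hr

lemma aux_even (s a : ℕ) (hs : s % 2 = 0) (hs0 : 0 < s) (ha : a % 2 = 1) (α : Fin (a + 3 * s) → ℂ)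
    (h : (X ^ (a + 3 * s) + X ^ (a + 2 * s) + X ^ (a + s) + X ^ a + 1 : ℂ[X]) = ∏ i, (X - C (α i)))
    (p : ℕ → ℂ) (hp : ∀ k, p k = ∑ i, α i ^ k) (k : ℕ) (hk : k % 2 = 0) (hk0 : 0 < k)
    (hkn : k < 2 * (a + 3 * s)) :
    ∃ m : ℤ, p k = 2 * m := by
  induction k using Nat.strong_induction_on with
  | _ k ih =>
    have hr := aux_rec s a α h p hp k (by omega)
    have e (m : ℕ) (c : ℂ) (hm : m % 2 = 0) (hm0 : 0 < m) (hc : c = a + 3 * s - m) :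
        ∃ z : ℤ, (if m ≤ k then p (k - m) else 0) - (if k = m then c else 0) = 2 * z := by
      rcases lt_trichotomy k m with h1 | h1 | h1
      · exact ⟨0, by rw [if_neg (by omega), if_neg (by omega)]; simp⟩
      · refine ⟨(m / 2 : ℕ), ?_⟩
        subst h1
        rw [if_pos le_rfl, if_pos rfl, hc, hp]
        have : k = 2 * (k / 2) := by omega
        have : (k : ℂ) = 2 * (k / 2 : ℕ) := by exact_mod_cast this
        rw [Int.cast_natCast]
        simp only [pow_zero, sum_const, card_univ, Fintype.card_fin, nsmul_eq_mul, Nat.sub_self]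
        push_cast
        linear_combination this
      · rw [if_pos (by omega), if_neg (by omega), sub_zero]
        exact ih _ (by omega) (by omega) (by omega) (by omega)
    obtain ⟨z1, h1⟩ := e s (a + 2 * s) hs hs0 (by ring)
    obtain ⟨z2, h2⟩ := e (2 * s) (a + s) (by omega) (by omega) (by push_cast; ring)
    obtain ⟨z3, h3⟩ := e (3 * s) a (by omega) (by omega) (by push_cast; ring)
    have h4 : (if a + 3 * s ≤ k then p (k - (a + 3 * s)) else 0) = 0 := by
      split_ifs
      · exact aux_odd s a hs hs0 ha α h p hp _ (by omega) (by omega)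
      · rfl
    rw [h1, h2, h3, h4] at hr
    exact ⟨-(z1 + z2 + z3), by push_cast; linear_combination hr⟩

lemma aux_four (s a : ℕ) (hs : s % 2 = 0) (hs0 : 0 < s) (ha : a % 2 = 1) (α : Fin (a + 3 * s) → ℂ)
    (h : (X ^ (a + 3 * s) + X ^ (a + 2 * s) + X ^ (a + s) + X ^ a + 1 : ℂ[X]) = ∏ i, (X - C (α i)))
    (p : ℕ → ℂ) (hp : ∀ k, p k = ∑ i, α i ^ k) (k : ℕ) (hk : k % 2 = 0) (hk0 : 0 < k)
    (hkn : k + 3 * s < 2 * (a + 3 * s)) :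
    p (k + 3 * s) + p (k + 2 * s) + p (k + s) + p k = 0 := by
  have hr := aux_rec s a α h p hp (k + 3 * s) (by omega)
  have h4 : (if a + 3 * s ≤ k + 3 * s then p (k + 3 * s - (a + 3 * s)) else 0) = 0 := by
    split_ifs
    · exact aux_odd s a hs hs0 ha α h p hp _ (by omega) (by omega)
    · rfl
  rw [h4, if_pos (by omega), if_neg (by omega), if_pos (by omega), if_neg (by omega),
    if_pos (by omega), if_neg (by omega), show k + 3 * s - s = k + 2 * s by omega,
    show k + 3 * s - 2 * s = k + s by omega, show k + 3 * s - 3 * s = k by omega] at hr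
  linear_combination hr

lemma aux_T (s a : ℕ) (hs : s % 2 = 0) (hs0 : 0 < s) (ha : a % 2 = 1) (α : Fin (a + 3 * s) → ℂ)
    (h : (X ^ (a + 3 * s) + X ^ (a + 2 * s) + X ^ (a + s) + X ^ a + 1 : ℂ[X]) = ∏ i, (X - C (α i))) :
    ∑ i, (α i ^ (a + 2 * s) + 2 * α i ^ (a + s) + 3 * α i ^ a) = 0 ∧
    ∃ m : ℤ, ∑ i, (α i ^ (a + 2 * s) + 2 * α i ^ (a + s) + 3 * α i ^ a) ^ 2 = 4 * (m : ℂ) := by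
  obtain ⟨p, hp⟩ : ∃ p : ℕ → ℂ, ∀ k, p k = ∑ i, α i ^ k := ⟨_, fun _ => rfl⟩
  have ho := aux_odd s a hs hs0 ha α h p hp
  have he := aux_even s a hs hs0 ha α h p hp
  have hf := aux_four s a hs hs0 ha α h p hp
  constructor
  · rw [sum_add_distrib, sum_add_distrib, ← mul_sum, ← mul_sum, ← hp, ← hp, ← hp,
      ho _ (by omega) (by omega), ho _ (by omega) (by omega), ho _ (by omega) (by omega)]
    simp
  · have e1 : ∑ i, (α i ^ (a + 2 * s) + 2 * α i ^ (a + s) + 3 * α i ^ a) ^ 2 =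
        p (2 * a + s + 3 * s) + 4 * p (2 * a + 3 * s) + 10 * p (2 * a + 2 * s)
          + 12 * p (2 * a + s) + 9 * p (2 * a) := by
      simp only [hp, mul_sum, ← sum_add_distrib]
      refine sum_congr rfl fun i _ => ?_
      ring
    have f1 := hf (2 * a) (by omega) (by omega) (by omega)
    have f2 := hf (2 * a + s) (by omega) (by omega) (by omega)
    rw [show 2 * a + s + 2 * s = 2 * a + 3 * s by omega,
      show 2 * a + s + s = 2 * a + 2 * s by omega] at f2
    obtain ⟨z1, h1⟩ := he (2 * a + 3 * s) (by omega) (by omega) (by omega)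
    obtain ⟨z2, h2⟩ := he (2 * a + 2 * s) (by omega) (by omega) (by omega)
    obtain ⟨z3, h3⟩ := he (2 * a + s) (by omega) (by omega) (by omega)
    obtain ⟨z4, h4⟩ := he (2 * a) (by omega) (by omega) (by omega)
    refine ⟨2 * z1 + 5 * z2 + 6 * z3 + 5 * z4, ?_⟩
    rw [e1]
    push_cast
    linear_combination f2 - f1 + 4 * h1 + 10 * h2 + 12 * h3 + 10 * h4

/-- the product of values of the derivative at the roots -/
lemma aux_main (s a : ℕ) (hs : s % 2 = 0) (hs0 : 0 < s) (ha : a % 2 = 1) (α : Fin (a + 3 * s) → ℂ)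
    (h : (X ^ (a + 3 * s) + X ^ (a + 2 * s) + X ^ (a + s) + X ^ a + 1 : ℂ[X]) = ∏ i, (X - C (α i)))
    (D : ℤ) (hD : (D : ℂ) = ∏ i, (derivative (∏ i, (X - C (α i)))).eval (α i)) :
    D ≡ ((a + 3 * s : ℕ) : ℤ) [ZMOD 8] := by
  have hr (i) : α i ^ (a + 3 * s) + α i ^ (a + 2 * s) + α i ^ (a + s) + α i ^ a + 1 = 0 := by
    have := congrArg (fun p => p.eval (α i)) h
    simp only [eval_prod, eval_add, eval_pow, eval_X, eval_one, eval_sub, eval_C] at this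
    rw [this]
    exact prod_eq_zero (mem_univ i) (by simp)
  have hodd : Odd (a + 3 * s) := by rw [Nat.odd_iff]; omega
  have hprod : ∏ i, α i = -1 := by
    have := congrArg (fun p => p.eval 0) h
    simp only [eval_prod, eval_add, eval_pow, eval_X, eval_one, eval_sub, eval_C] at this
    rw [zero_pow (by omega), zero_pow (by omega), zero_pow (by omega), zero_pow (by omega)] at this
    simp only [zero_sub, prod_neg] at this
    simp [hodd.neg_one_pow] at this
    linear_combination this
  have hX (m : ℕ) : (X : ℂ[X]) * derivative (X ^ m) = (m : ℂ[X]) * X ^ m := by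
    rcases m with _ | m
    · simp
    · simp; ring
  have hd (i) : α i * (derivative (∏ i, (X - C (α i)))).eval (α i) =
      - (((a + 3 * s : ℕ) : ℂ) + s * (α i ^ (a + 2 * s) + 2 * α i ^ (a + s) + 3 * α i ^ a)) := by
    have e : α i * (derivative (∏ i, (X - C (α i)))).eval (α i) =
      (X * (derivative (∏ i, (X - C (α i))))).eval (α i) := by simp
    rw [e, ← h]
    simp only [derivative_add, mul_add, hX, derivative_one]
    simp
    linear_combination (a + 3 * s : ℂ) * hr i
  have hD' : (D : ℂ) = ∏ i, (((a + 3 * s : ℕ) : ℂ) +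
      s * (α i ^ (a + 2 * s) + 2 * α i ^ (a + s) + 3 * α i ^ a)) := by
    have := prod_congr rfl fun i (_ : i ∈ univ) => hd i
    rw [prod_mul_distrib, hprod, ← hD, prod_neg] at this
    simp only [card_univ, Fintype.card_fin, hodd.neg_one_pow] at this
    linear_combination -this
  have hint (i) : IsIntegral ℤ (α i) := by
    refine ⟨X ^ (a + 3 * s) + (X ^ (a + 2 * s) + X ^ (a + s) + X ^ a + 1), ?_, ?_⟩
    · apply monic_X_pow_add
      have : (X ^ (a + 2 * s) + X ^ (a + s) + X ^ a + 1 : ℤ[X]).natDegree ≤ a + 2 * s := by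
        compute_degree
        all_goals omega
      refine (degree_le_of_natDegree_le this).trans_lt ?_
      norm_cast
      omega
    · simp
      linear_combination hr i
  obtain ⟨t1, m, t2⟩ := aux_T s a hs hs0 ha α h
  have o2 : ((2 : integralClosure ℤ ℂ) : ℂ) = 2 := rfl
  have o3 : ((3 : integralClosure ℤ ℂ) : ℂ) = 3 := rfl
  let b : Fin (a + 3 * s) → integralClosure ℤ ℂ := fun i =>
    (⟨α i, hint i⟩ ^ (a + 2 * s) + 2 * ⟨α i, hint i⟩ ^ (a + s) + 3 * ⟨α i, hint i⟩ ^ a)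
  have hb (i) : (b i : ℂ) = α i ^ (a + 2 * s) + 2 * α i ^ (a + s) + 3 * α i ^ a := by
    simp [b, o2, o3]
  obtain ⟨e, R, he, hR⟩ := aux_prod ((a + 3 * s : ℕ) : integralClosure ℤ ℂ) (s : integralClosure ℤ ℂ) b univ
  have he' := congrArg (fun x : integralClosure ℤ ℂ => (x : ℂ)) he
  have hR' := congrArg (fun x : integralClosure ℤ ℂ => (x : ℂ)) hR
  push_cast at he' hR' hD'
  simp only [hb, t1, t2, o2, o3, ← hD'] at he' hR'
  have he2 : (e : ℂ) = -2 * m := by linear_combination he' / 2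
  obtain ⟨t, rfl⟩ : ∃ t, s = 2 * t := ⟨s / 2, by omega⟩
  generalize hn : a + 3 * (2 * t) = n at *
  have hn' : (a + 3 * (2 * t) : ℂ) = n := by rw [← hn]; push_cast; ring
  have hdvd : (8 : ℤ) ∣ (n ^ 2 * D - n ^ n * (n ^ 2 - 8 * t ^ 2 * m)) := by
    refine aux_int _ _ (by norm_num) ((t : ℂ) ^ 3 * R) ?_ ?_
    · have ht : IsIntegral ℤ (t : ℂ) := by
        simpa using isIntegral_algebraMap (R := ℤ) (A := ℂ) (x := (t : ℤ))
      exact (ht.pow 3).mul R.2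
    · push_cast at hR' ⊢
      rw [he2, hn'] at hR'
      simp only [card_univ, Fintype.card_fin] at hR'
      linear_combination hR'
  obtain ⟨q, rfl⟩ := hodd
  have hsq : (((2 * q + 1 : ℕ) : ℤ)) ^ 2 ≡ 1 [ZMOD 8] := by
    have : (((2 * q + 1 : ℕ) : ℤ)) ^ 2 - 1 = 4 * (q * (q + 1)) := by push_cast; ring
    obtain ⟨w, hw⟩ := Int.even_mul_succ_self (q : ℤ)
    apply Int.ModEq.symm
    rw [Int.modEq_iff_dvd, this, hw]
    exact ⟨w, by ring⟩
  have hpow : (((2 * q + 1 : ℕ) : ℤ)) ^ (2 * q + 1) ≡ (2 * q + 1 : ℕ) [ZMOD 8] := by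
    rw [pow_succ, pow_mul]
    simpa using (hsq.pow q).mul_right _
  have h1 : ((2 * q + 1 : ℕ) : ℤ) ^ 2 * D ≡ ((2 * q + 1 : ℕ) : ℤ) ^ (2 * q + 1) * (((2 * q + 1 : ℕ) : ℤ) ^ 2 - 8 * t ^ 2 * m) [ZMOD 8] :=
    (Int.modEq_iff_dvd.mpr hdvd).symm
  have h2 : 8 * (t : ℤ) ^ 2 * m ≡ 0 [ZMOD 8] := Int.modEq_zero_iff_dvd.mpr ⟨t ^ 2 * m, by ring⟩
  have h3 := h1.trans (hpow.mul (hsq.sub h2))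
  have h4 := (hsq.mul_right D).symm.trans h3
  simpa using h4

lemma aux_disc (n : ℕ) (α : Fin n → ℂ) :
    ∏ i : Fin n, ∏ j ∈ Finset.Ioi i, (α i - α j) ^ 2 =
      (-1) ^ (n * (n - 1) / 2) * ∏ i, (derivative (∏ i, (X - C (α i)))).eval (α i) := by
  classical
  have h1 (i) : (derivative (∏ i, (X - C (α i)))).eval (α i) = ∏ j ∈ {i}ᶜ, (α i - α j) := by
    rw [derivative_prod_finset, eval_finsetSum, sum_eq_single i]
    · simp [eval_prod, compl_singleton]
    · intro j _ hj
      simp only [eval_mul, eval_prod]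
      rw [prod_eq_zero (i := i)] <;> simp [hj.symm]
    · simp
  have h2 := prod_prod_Ioi_mul_eq_prod_prod_off_diag (fun i j => α j - α i)
  simp only [h1]
  rw [← h2]
  have h3 : ∏ i : Fin n, ∏ j ∈ Ioi i, (α i - α j) * (α j - α i) =
      ∏ i : Fin n, ((-1) ^ (n - 1 - i : ℕ) * ∏ j ∈ Ioi i, (α i - α j) ^ 2) := by
    refine prod_congr rfl fun i _ => ?_
    rw [← Fin.card_Ioi, ← prod_const, ← prod_mul_distrib]
    refine prod_congr rfl fun j _ => ?_
    ring
  rw [h3, prod_mul_distrib, prod_pow_eq_pow_sum, Fin.sum_univ_eq_sum_range (fun i => n - 1 - i),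
    Finset.sum_range_reflect (fun i => i), Finset.sum_range_id, ← mul_assoc, ← mul_pow]
  simp

lemma aux_exists (n : ℕ) (f : ℤ[X]) (α : Fin n → ℂ) 
    (h : f.map (Int.castRingHom ℂ) = ∏ i, (X - C (α i))) :
    ∃ D : ℤ, (D : ℂ) = ∏ i, (derivative (∏ i, (X - C (α i)))).eval (α i) := by
  refine ⟨resultant f (derivative f) n (n - 1), ?_⟩
  have h1 := resultant_map_map f (derivative f) n (n - 1) (Int.castRingHom ℂ)
  rw [← derivative_map, h] at h1
  have hdeg : (∏ i, (X - C (α i))).natDegree = n := by simp [natDegree_prod_of_monic, monic_X_sub_C]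
  have hroots : (∏ i, (X - C (α i))).roots = univ.val.map α := by
    rw [← roots_multiset_prod_X_sub_C (univ.val.map α), Multiset.map_map]
    rfl
  have h2 := resultant_eq_prod_eval (∏ i, (X - C (α i))) (derivative (∏ i, (X - C (α i)))) (n - 1)
    ((natDegree_derivative_le _).trans (by rw [hdeg])) (IsAlgClosed.splits _)
  rw [hdeg, h1, (monic_prod_of_monic _ _ fun i _ => monic_X_sub_C _).leadingCoeff, hroots] at h2
  rw [Multiset.map_map, one_pow, one_mul] at h2
  exact h2

theorem discriminant_mod_eight (s n : ℕ) (hs : Even s) (hs0 : 0 < s)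
    (hodd : Odd n) (hn : 3 * s < n) (α : Fin n → ℂ)
    (hroots : (X ^ n + X ^ (n - s) + X ^ (n - 2 * s) + X ^ (n - 3 * s) + 1 :
        Polynomial ℤ).map (Int.castRingHom ℂ) =
      ∏ i : Fin n, (X - C (α i))) :
    ∃ D : ℤ,
      (D : ℂ) = ∏ i : Fin n, ∏ j ∈ Finset.Ioi i, (α i - α j) ^ 2 ∧
      D ≡ (-1) ^ (n * (n - 1) / 2) * (n : ℤ) [ZMOD 8] ∧
      ((n % 8 = 1 ∨ n % 8 = 7) → D ≡ 1 [ZMOD 8]) ∧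
      ((n % 8 = 3 ∨ n % 8 = 5) → D ≡ 5 [ZMOD 8]) := by
  obtain ⟨D, hD⟩ := aux_exists n _ α hroots
  have key : D ≡ n [ZMOD 8] := by
    obtain ⟨a, rfl⟩ : ∃ a, n = a + 3 * s := ⟨n - 3 * s, by omega⟩
    rw [Nat.even_iff] at hs
    rw [Nat.odd_iff] at hodd
    refine aux_main s a hs hs0 (by omega) α ?_ D hD
    rw [← hroots, show a + 3 * s - s = a + 2 * s by omega, show a + 3 * s - 2 * s = a + s by omega,
      show a + 3 * s - 3 * s = a by omega]
    simp
  have key2 := key.mul_left ((-1) ^ (n * (n - 1) / 2))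
  have hpar : n % 8 = 1 ∨ n % 8 = 3 ∨ n % 8 = 5 ∨ n % 8 = 7 := by
    rw [Nat.odd_iff] at hodd; omega
  have hval : ∃ q r, n = 8 * q + r ∧ r = n % 8 := ⟨n / 8, n % 8, by omega, rfl⟩
  obtain ⟨q, r, hq, hr⟩ := hval
  refine ⟨(-1) ^ (n * (n - 1) / 2) * D, ?_, key2, fun h => key2.trans ?_, fun h => key2.trans ?_⟩
  · rw [aux_disc, ← hD]; push_cast; rfl
  · rcases h with h | h <;> rw [h] at hr <;> subst hr
    · have : n * (n - 1) / 2 = 2 * ((8 * q + 1) * (2 * q)) := by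
        rw [hq, Nat.add_sub_cancel]
        apply Nat.div_eq_of_eq_mul_left (by norm_num); ring
      rw [this, pow_mul]
      simp [Int.ModEq]; omega
    · have : n * (n - 1) / 2 = 2 * (16 * q * q + 26 * q + 10) + 1 := by
        rw [hq, show 8 * q + 7 - 1 = 8 * q + 6 by omega]
        apply Nat.div_eq_of_eq_mul_left (by norm_num); ring
      rw [this, pow_succ, pow_mul]
      simp [Int.ModEq]; omega
  · rcases h with h | h <;> rw [h] at hr <;> subst hr
    · have : n * (n - 1) / 2 = 2 * (16 * q * q + 10 * q + 1) + 1 := by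
        rw [hq, show 8 * q + 3 - 1 = 8 * q + 2 by omega]
        apply Nat.div_eq_of_eq_mul_left (by norm_num); ring
      rw [this, pow_succ, pow_mul]
      simp [Int.ModEq]; omega
    · have : n * (n - 1) / 2 = 2 * ((8 * q + 5) * (2 * q + 1)) := by
        rw [hq, show 8 * q + 5 - 1 = 8 * q + 4 by omega]
        apply Nat.div_eq_of_eq_mul_left (by norm_num); ring
      rw [this, pow_mul]
      simp [Int.ModEq]; omega
end
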